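/- There exist absolute constants 0 < c ≤ C such that for every θ ∈ (0,1) and every positive integer n, c · n^{(3-θ)/2} θ^{-1} (1-θ)^{-2} ≤ ∫_{A} G(s,t,u,v) ds dt du dv ≤ C · n^{(3-θ)/2} θ^{-1} (1-θ)^{-2}, where A = { (s,t,u,v) ∈ (0,∞)⁴ : 0 < u < 1, v ≥ n^{1/2}, s < n^{1/4} u^{1/2}, t ≥ n^{-1/4} u^{-1/2} s }. -/

import Mathlib

open MeasureTheory Set Real

/-- The integrand `G(s,t,u,v)` from the paper's computation of the completely 1-summing
norm of the identity `OH_n → ℓ^n_p`, with `θ = 2/p'`. Here `p = (s, t, u, v)`. -/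
noncomputable def G (θ : ℝ) (n : ℕ) (p : ℝ × ℝ × ℝ × ℝ) : ℝ :=
  (n : ℝ) ^ (2 : ℕ) * p.1 ^ (-1 - 2 * θ) * p.2.1 ^ (-1 - 2 * θ) *
    min (min (min ((n : ℝ)⁻¹ * p.1 ^ (4 : ℝ) * p.2.2.1 ^ (-2 : ℝ) * p.2.2.2 ^ (-2 : ℝ))
                  ((n : ℝ)⁻¹ * p.2.1 ^ (4 : ℝ)))
             (min (p.1 ^ (4 : ℝ) * p.2.2.1 ^ (-2 : ℝ)) (p.2.1 ^ (4 : ℝ) * p.2.2.2 ^ (-2 : ℝ))))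
        (min (min (p.2.2.1 ^ (-2 : ℝ) * p.2.2.2 ^ (-2 : ℝ)) (p.2.2.1 ^ (-2 : ℝ)))
             (min 1 (p.2.2.2 ^ (-2 : ℝ))))

/-- The region of integration. -/
def A (n : ℕ) : Set (ℝ × ℝ × ℝ × ℝ) :=
  {p | 0 < p.1 ∧ 0 < p.2.1 ∧ 0 < p.2.2.1 ∧ 0 < p.2.2.2 ∧ p.2.2.1 < 1 ∧ (n : ℝ) ^ ((1:ℝ)/2) ≤ p.2.2.2 ∧ p.1 < (n : ℝ) ^ ((1:ℝ)/4) * p.2.2.1 ^ ((1:ℝ)/2) ∧ (n : ℝ) ^ (-(1/4) : ℝ) * p.2.2.1 ^ (-(1/2) : ℝ) * p.1 ≤ p.2.1}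

/-!
On `A` the minimum in `G` is its first term, so the integrand is a monomial in `s, t, u, v`.
With `σ = n ^ (1/4) * u ^ (1/2)` the region reads `0 < u < 1`, `0 < s < σ`, `s / σ ≤ t`,
`√n ≤ v`, so integrating successively over `v`, `t`, `s`, `u` meets only power functions. The
integral over `t` contributes the factor `1 / (2 * θ)`, the one over `s` the factor
`1 / (4 * (1 - θ))` and the one over `u` the factor `1 / (1 - θ)`: the integral equals
`n ^ ((3 - θ) / 2) / (8 * θ * (1 - θ) ^ 2)`, and both constants may be taken to be `1 / 8`.
-/

section

variable {α β γ δ : Type*} [MeasurableSpace α] [MeasurableSpace β] [MeasurableSpace γ]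
  [MeasurableSpace δ] {μ : Measure α} {ν : Measure β} {ρ : Measure γ} {κ : Measure δ}

lemma lintegral_ite_zero (P : Prop) [Decidable P] (g : α → ENNReal) :
    ∫⁻ x, (if P then g x else 0) ∂μ = if P then ∫⁻ x, g x ∂μ else 0 := by
  split_ifs <;> simp only [lintegral_zero]

variable [SFinite μ] [SFinite ν] [SFinite ρ] [SFinite κ] {f : α × β × γ × δ → ENNReal}

lemma lintegral_prod_prod_prod_reorder (hf : Measurable f) :
    ∫⁻ p, f p ∂μ.prod (ν.prod (ρ.prod κ)) =
      ∫⁻ c, ∫⁻ a, ∫⁻ b, ∫⁻ d, f (a, b, c, d) ∂κ ∂ν ∂μ ∂ρ := by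
  calc ∫⁻ p, f p ∂μ.prod (ν.prod (ρ.prod κ))
      = ∫⁻ a, ∫⁻ b, ∫⁻ c, ∫⁻ d, f (a, b, c, d) ∂κ ∂ρ ∂ν ∂μ := by
        rw [lintegral_prod _ hf.aemeasurable]
        refine lintegral_congr fun a => ?_
        rw [lintegral_prod _ (by fun_prop)]
        refine lintegral_congr fun b => ?_
        rw [lintegral_prod _ (by fun_prop)]
    _ = ∫⁻ a, ∫⁻ c, ∫⁻ b, ∫⁻ d, f (a, b, c, d) ∂κ ∂ν ∂ρ ∂μ :=
        lintegral_congr fun a => lintegral_lintegral_swap (by fun_prop)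
    _ = ∫⁻ c, ∫⁻ a, ∫⁻ b, ∫⁻ d, f (a, b, c, d) ∂κ ∂ν ∂μ ∂ρ :=
        lintegral_lintegral_swap (by fun_prop)

lemma setLIntegral_prod_prod_prod_of_mem_iff {S : Set (α × β × γ × δ)} {U : Set γ} {V : γ → Set α}
    {W : γ → α → Set β} {X : γ → α → β → Set δ} (hf : Measurable f) (hS : MeasurableSet S)
    (hU : MeasurableSet U) (hV : ∀ c, MeasurableSet (V c)) (hW : ∀ c a, MeasurableSet (W c a))
    (hX : ∀ c a b, MeasurableSet (X c a b))
    (hmem : ∀ a b c d, (a, b, c, d) ∈ S ↔ c ∈ U ∧ a ∈ V c ∧ b ∈ W c a ∧ d ∈ X c a b) :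
    ∫⁻ p in S, f p ∂μ.prod (ν.prod (ρ.prod κ)) =
      ∫⁻ c in U, ∫⁻ a in V c, ∫⁻ b in W c a, ∫⁻ d in X c a b, f (a, b, c, d) ∂κ ∂ν ∂μ ∂ρ := by
  classical
  rw [← lintegral_indicator hS, lintegral_prod_prod_prod_reorder (hf.indicator hS)]
  simp only [← lintegral_indicator (hX _ _ _), ← lintegral_indicator (hW _ _),
    ← lintegral_indicator (hV _), ← lintegral_indicator hU, indicator_apply, hmem, ite_and,
    lintegral_ite_zero]

end

lemma setLIntegral_Ici_const_mul_rpow {k a c : ℝ} (hk : 0 ≤ k) (ha : a < -1) (hc : 0 < c) :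
    ∫⁻ x in Ici c, ENNReal.ofReal (k * x ^ a) =
      ENNReal.ofReal (k * (-c ^ (a + 1) / (a + 1))) := by
  rw [setLIntegral_congr Ioi_ae_eq_Ici.symm, ← integral_Ioi_rpow_of_lt ha hc,
    ← integral_const_mul, ofReal_integral_eq_lintegral_ofReal]
  · exact (integrableOn_Ioi_rpow_of_lt ha hc).const_mul k
  · filter_upwards [ae_restrict_mem measurableSet_Ioi] with x hx
    exact mul_nonneg hk (rpow_nonneg (hc.trans hx).le _)

lemma setLIntegral_Ioo_const_mul_rpow {k a b : ℝ} (hk : 0 ≤ k) (ha : -1 < a) (hb : 0 < b) :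
    ∫⁻ x in Ioo 0 b, ENNReal.ofReal (k * x ^ a) =
      ENNReal.ofReal (k * (b ^ (a + 1) / (a + 1))) := by
  have h_integral : ∫ x in Ioc 0 b, x ^ a = b ^ (a + 1) / (a + 1) := by
    rw [← intervalIntegral.integral_of_le hb.le, integral_rpow (Or.inl ha),
      zero_rpow (by linarith), sub_zero]
  rw [setLIntegral_congr Ioo_ae_eq_Ioc, ← h_integral, ← integral_const_mul,
    ofReal_integral_eq_lintegral_ofReal]
  · exact (intervalIntegral.intervalIntegrable_rpow' ha).1.const_mul k
  · filter_upwards [ae_restrict_mem measurableSet_Ioc] with x hx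
    exact mul_nonneg hk (rpow_nonneg hx.1.le _)

lemma setLIntegral_Ioo_setLIntegral_Ici_div_rpow {k a b σ : ℝ} (hk : 0 ≤ k) (hb : b < -1)
    (hab : -2 < a + b) (hσ : 0 < σ) :
    ∫⁻ s in Ioo 0 σ, ∫⁻ t in Ici (s / σ), ENNReal.ofReal (k * s ^ a * t ^ b) =
      ENNReal.ofReal (k * (-σ ^ (a + 1) / ((b + 1) * (a + b + 2)))) := by
  have integral_t : ∀ s ∈ Ioo 0 σ, ∫⁻ t in Ici (s / σ), ENNReal.ofReal (k * s ^ a * t ^ b) =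
      ENNReal.ofReal (k * (σ ^ (-(b + 1)) / -(b + 1)) * s ^ (a + b + 1)) := by
    intro s hs
    have hs0 : 0 < s := hs.1
    rw [setLIntegral_Ici_const_mul_rpow (by positivity) hb (by positivity),
      div_rpow hs0.le hσ.le, rpow_neg hσ.le, add_assoc a, rpow_add hs0 a]
    congr 1
    field_simp
  have hk' : 0 ≤ k * (σ ^ (-(b + 1)) / -(b + 1)) :=
    mul_nonneg hk (div_nonneg (by positivity) (by linarith))
  rw [setLIntegral_congr_fun measurableSet_Ioo integral_t,
    setLIntegral_Ioo_const_mul_rpow hk' (by linarith) hσ]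
  have hσ_pow : σ ^ (a + 1) = σ ^ (-(b + 1)) * σ ^ (a + b + 1 + 1) := by
    rw [← rpow_add hσ]; ring_nf
  rw [hσ_pow, show a + b + 2 = a + b + 1 + 1 by ring]
  congr 1
  field_simp

lemma min_min_terms_eq_first {k a b x y : ℝ} (hb : 0 ≤ b) (hbk : b ≤ k) (hk : k ≤ 1) (ha : 1 ≤ a)
    (hx : 0 ≤ x) (h_one : k * x * a ≤ 1) (hy : k * x * a ≤ y) :
    min (min (min (k * x * a * b) (k * y)) (min (x * a) (y * b)))
      (min (min (a * b) a) (min 1 b)) = k * x * a * b := by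
  have hxa : 0 ≤ x * a := by positivity
  have hm : 0 ≤ k * x * a := by rw [mul_assoc]; exact mul_nonneg (hb.trans hbk) hxa
  have hky : k * x * a * b ≤ k * y := by
    rw [mul_comm k y]; exact mul_le_mul hy hbk hb (hm.trans hy)
  have hxa' : k * x * a * b ≤ x * a :=
    calc k * x * a * b = x * a * (k * b) := by ring
      _ ≤ x * a := mul_le_of_le_one_right hxa (mul_le_one₀ hk hb (hbk.trans hk))
  have hyb : k * x * a * b ≤ y * b := mul_le_mul_of_nonneg_right hy hb
  have hb' : k * x * a * b ≤ b := mul_le_of_le_one_left hb h_one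
  have hb_one : b ≤ 1 := hbk.trans hk
  have hba : b ≤ min (min (a * b) a) (min 1 b) :=
    le_min (le_min (le_mul_of_one_le_left hb ha) (hb_one.trans ha)) (le_min hb_one le_rfl)
  rw [min_eq_left hky, min_eq_left (le_min hxa' hyb), min_eq_left (hb'.trans hba)]

/-- The upper end `σ = N ^ (1/4) * u ^ (1/2)` of the range of `s` in the slice of the region at
height `u`. The lower end of the range of `t` is then `s / σ`. -/
noncomputable def cutoff (N u : ℝ) : ℝ := N ^ ((1 : ℝ) / 4) * u ^ ((1 : ℝ) / 2)

lemma cutoff_pos {N u : ℝ} (hN : 0 < N) (hu : 0 < u) : 0 < cutoff N u := by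
  unfold cutoff; positivity

lemma cutoff_rpow {N u : ℝ} (hN : 0 ≤ N) (hu : 0 ≤ u) (a : ℝ) :
    cutoff N u ^ a = N ^ (a / 4) * u ^ (a / 2) := by
  rw [cutoff, mul_rpow (by positivity) (by positivity), ← rpow_mul hN, ← rpow_mul hu]
  ring_nf

lemma div_cutoff_rpow_four {N u s : ℝ} (hN : 0 ≤ N) (hu : 0 ≤ u) (hs : 0 ≤ s) :
    (s / cutoff N u) ^ (4 : ℝ) = N⁻¹ * s ^ (4 : ℝ) * u ^ (-2 : ℝ) := by
  rw [div_rpow hs (by unfold cutoff; positivity), cutoff_rpow hN hu, rpow_neg hu,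
    div_self four_ne_zero, rpow_one, show (4 : ℝ) / 2 = 2 by norm_num]
  ring

lemma mem_A_iff {n : ℕ} (hn : 0 < n) (s t u v : ℝ) :
    (s, t, u, v) ∈ A n ↔ u ∈ Ioo 0 1 ∧ s ∈ Ioo 0 (cutoff n u) ∧ t ∈ Ici (s / cutoff n u) ∧
      v ∈ Ici ((n : ℝ) ^ ((1 : ℝ) / 2)) := by
  have hN : (0 : ℝ) < n := by exact_mod_cast hn
  have h_div (hu : 0 < u) :
      (n : ℝ) ^ (-(1 / 4) : ℝ) * u ^ (-(1 / 2) : ℝ) * s = s / cutoff n u := by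
    rw [cutoff, rpow_neg hN.le, rpow_neg hu.le, ← mul_inv, inv_mul_eq_div]
  simp only [A, mem_ofPred_eq, mem_Ioo, mem_Ici]
  constructor
  · rintro ⟨hs, -, hu, -, hu1, hv, hsu, hst⟩
    exact ⟨⟨hu, hu1⟩, ⟨hs, hsu⟩, h_div hu ▸ hst, hv⟩
  · rintro ⟨⟨hu, hu1⟩, ⟨hs, hsu⟩, hst, hv⟩
    have ht : 0 < t := (div_pos hs (cutoff_pos hN hu)).trans_le hst
    exact ⟨hs, ht, hu, (rpow_pos_of_pos hN _).trans_le hv, hu1, hv, hsu, (h_div hu).symm ▸ hst⟩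

lemma measurableSet_A (n : ℕ) : MeasurableSet (A n) := by
  unfold A
  measurability

lemma measurable_G (θ : ℝ) (n : ℕ) : Measurable (G θ n) := by
  unfold G
  fun_prop

lemma G_nonneg (θ : ℝ) (n : ℕ) {s t u v : ℝ} (hs : 0 ≤ s) (ht : 0 ≤ t) (hu : 0 ≤ u) (hv : 0 ≤ v) :
    0 ≤ G θ n (s, t, u, v) := by
  unfold G
  positivity

lemma G_eq_of_mem_A (θ : ℝ) {n : ℕ} {s t u v : ℝ} (hn : 0 < n) (h : (s, t, u, v) ∈ A n) :
    G θ n (s, t, u, v) =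
      n * u ^ (-2 : ℝ) * s ^ (3 - 2 * θ) * t ^ (-1 - 2 * θ) * v ^ (-2 : ℝ) := by
  obtain ⟨⟨hu, hu1⟩, ⟨hs, hsu⟩, hst, hv⟩ := (mem_A_iff hn s t u v).1 h
  have hN : (1 : ℝ) ≤ n := by exact_mod_cast hn
  have hN0 : (0 : ℝ) < n := by positivity
  have hσ : 0 < cutoff n u := cutoff_pos hN0 hu
  have hv0 : 0 < v := (rpow_pos_of_pos hN0 _).trans_le hv
  have hv_le : v ^ (-2 : ℝ) ≤ (n : ℝ)⁻¹ := by
    calc v ^ (-2 : ℝ) ≤ ((n : ℝ) ^ ((1 : ℝ) / 2)) ^ (-2 : ℝ) :=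
          rpow_le_rpow_of_nonpos (by positivity) hv (by norm_num)
      _ = (n : ℝ)⁻¹ := by rw [← rpow_mul hN0.le, ← rpow_neg_one]; norm_num
  have hs_le : (n : ℝ)⁻¹ * s ^ (4 : ℝ) * u ^ (-2 : ℝ) ≤ 1 := by
    rw [← div_cutoff_rpow_four hN0.le hu.le hs.le]
    exact rpow_le_one (by positivity) ((div_le_one hσ).2 hsu.le) (by norm_num)
  have ht_le : (n : ℝ)⁻¹ * s ^ (4 : ℝ) * u ^ (-2 : ℝ) ≤ t ^ (4 : ℝ) := by
    rw [← div_cutoff_rpow_four hN0.le hu.le hs.le]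
    exact rpow_le_rpow (by positivity) hst (by norm_num)
  have hs_pow : s ^ (3 - 2 * θ) = s ^ (-1 - 2 * θ) * s ^ (4 : ℝ) := by
    rw [← rpow_add hs]; ring_nf
  rw [G, min_min_terms_eq_first (rpow_nonneg hv0.le _) hv_le (inv_le_one_of_one_le₀ hN)
    (one_le_rpow_of_pos_of_le_one_of_nonpos hu hu1.le (by norm_num)) (by positivity) hs_le ht_le,
    hs_pow]
  field_simp

lemma setLIntegral_A_eq_iterated (θ : ℝ) {n : ℕ} (hn : 0 < n) :
    ∫⁻ p in A n, ENNReal.ofReal (G θ n p) =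
      ∫⁻ u in Ioo 0 1, ∫⁻ s in Ioo 0 (cutoff n u), ∫⁻ t in Ici (s / cutoff n u),
        ∫⁻ v in Ici ((n : ℝ) ^ ((1 : ℝ) / 2)), ENNReal.ofReal
          (n * u ^ (-2 : ℝ) * s ^ (3 - 2 * θ) * t ^ (-1 - 2 * θ) * v ^ (-2 : ℝ)) := by
  refine (setLIntegral_prod_prod_prod_of_mem_iff (measurable_G θ n).ennreal_ofReal
    (measurableSet_A n) measurableSet_Ioo (fun _ => measurableSet_Ioo)
    (fun _ _ => measurableSet_Ici) (fun _ _ _ => measurableSet_Ici) (mem_A_iff hn)).trans ?_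
  refine setLIntegral_congr_fun measurableSet_Ioo fun u hu => ?_
  refine setLIntegral_congr_fun measurableSet_Ioo fun s hs => ?_
  refine setLIntegral_congr_fun measurableSet_Ici fun t ht => ?_
  refine setLIntegral_congr_fun measurableSet_Ici fun v hv => ?_
  simp only [G_eq_of_mem_A θ hn ((mem_A_iff hn s t u v).2 ⟨hu, hs, ht, hv⟩)]

lemma setLIntegral_Ici_rpow_half_const_mul_rpow_neg_two {k N : ℝ} (hk : 0 ≤ k) (hN : 0 < N) :
    ∫⁻ v in Ici (N ^ ((1 : ℝ) / 2)), ENNReal.ofReal (k * v ^ (-2 : ℝ)) =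
      ENNReal.ofReal (k * N ^ (-(1 / 2) : ℝ)) := by
  rw [setLIntegral_Ici_const_mul_rpow hk (by norm_num) (by positivity), ← rpow_mul hN.le]
  norm_num

lemma setLIntegral_cutoff_slice {θ N u : ℝ} (hθ0 : 0 < θ) (hθ1 : θ < 1) (hN : 0 < N) (hu : 0 < u) :
    ∫⁻ s in Ioo 0 (cutoff N u), ∫⁻ t in Ici (s / cutoff N u), ∫⁻ v in Ici (N ^ ((1 : ℝ) / 2)),
        ENNReal.ofReal (N * u ^ (-2 : ℝ) * s ^ (3 - 2 * θ) * t ^ (-1 - 2 * θ) * v ^ (-2 : ℝ)) =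
      ENNReal.ofReal (N ^ ((3 - θ) / 2) / (8 * θ * (1 - θ)) * u ^ (-θ)) := by
  have hσ : 0 < cutoff N u := cutoff_pos hN hu
  have integral_v : ∀ s ∈ Ioo 0 (cutoff N u), ∀ t ∈ Ici (s / cutoff N u),
      ∫⁻ v in Ici (N ^ ((1 : ℝ) / 2)),
        ENNReal.ofReal (N * u ^ (-2 : ℝ) * s ^ (3 - 2 * θ) * t ^ (-1 - 2 * θ) * v ^ (-2 : ℝ)) =
      ENNReal.ofReal (N ^ ((1 : ℝ) / 2) * u ^ (-2 : ℝ) * s ^ (3 - 2 * θ) * t ^ (-1 - 2 * θ)) := by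
    intro s hs t ht
    have hs0 : 0 < s := hs.1
    have ht0 : 0 < t := (div_pos hs0 hσ).trans_le ht
    have hN_pow : N ^ ((1 : ℝ) / 2) = N * N ^ (-(1 / 2) : ℝ) := by
      rw [← rpow_one_add' hN.le (by norm_num)]; norm_num
    rw [setLIntegral_Ici_rpow_half_const_mul_rpow_neg_two (by positivity) hN, hN_pow]
    ring_nf
  have h_pow : N ^ ((1 : ℝ) / 2) * u ^ (-2 : ℝ) * cutoff N u ^ (3 - 2 * θ + 1) =
      N ^ ((3 - θ) / 2) * u ^ (-θ) := by
    rw [cutoff_rpow hN.le hu.le, mul_mul_mul_comm, ← rpow_add hN, ← rpow_add hu]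
    ring_nf
  have h_denom : (-1 - 2 * θ + 1) * (3 - 2 * θ + (-1 - 2 * θ) + 2) = -(8 * θ * (1 - θ)) := by
    ring
  rw [setLIntegral_congr_fun measurableSet_Ioo fun s hs =>
      setLIntegral_congr_fun measurableSet_Ici (integral_v s hs),
    setLIntegral_Ioo_setLIntegral_Ici_div_rpow (by positivity) (by linarith) (by linarith) hσ,
    div_mul_eq_mul_div, ← h_pow, h_denom, neg_div_neg_eq, mul_div_assoc]

lemma setLIntegral_A_G {θ : ℝ} {n : ℕ} (hθ0 : 0 < θ) (hθ1 : θ < 1) (hn : 0 < n) :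
    ∫⁻ p in A n, ENNReal.ofReal (G θ n p) =
      ENNReal.ofReal (1 / 8 * ((n : ℝ) ^ ((3 - θ) / 2) * θ ^ (-1 : ℝ) * (1 - θ) ^ (-2 : ℝ))) := by
  have hN : (0 : ℝ) < n := by exact_mod_cast hn
  have hθ : 0 < 1 - θ := sub_pos.2 hθ1
  rw [setLIntegral_A_eq_iterated θ hn,
    setLIntegral_congr_fun measurableSet_Ioo fun u hu => setLIntegral_cutoff_slice hθ0 hθ1 hN hu.1,
    setLIntegral_Ioo_const_mul_rpow (by positivity) (by linarith) one_pos, one_rpow,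
    rpow_neg_one, rpow_neg hθ.le, rpow_two, neg_add_eq_sub]
  field_simp

lemma setIntegral_A_G {θ : ℝ} {n : ℕ} (hθ0 : 0 < θ) (hθ1 : θ < 1) (hn : 0 < n) :
    ∫ p in A n, G θ n p =
      1 / 8 * ((n : ℝ) ^ ((3 - θ) / 2) * θ ^ (-1 : ℝ) * (1 - θ) ^ (-2 : ℝ)) := by
  have : 0 < 1 - θ := sub_pos.2 hθ1
  have G_nonneg_A : 0 ≤ᵐ[volume.restrict (A n)] G θ n := by
    filter_upwards [ae_restrict_mem (measurableSet_A n)] with ⟨s, t, u, v⟩ ⟨hs, ht, hu, hv, _⟩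
    exact G_nonneg θ n hs.le ht.le hu.le hv.le
  rw [integral_eq_lintegral_of_nonneg_ae G_nonneg_A (measurable_G θ n).aestronglyMeasurable,
    setLIntegral_A_G hθ0 hθ1 hn, ENNReal.toReal_ofReal (by positivity)]

theorem stmt_11 :
    ∃ c C : ℝ, 0 < c ∧ c ≤ C ∧ ∀ θ : ℝ, 0 < θ → θ < 1 → ∀ n : ℕ, 0 < n →
      c * ((n : ℝ) ^ ((3 - θ) / 2) * θ ^ (-1 : ℝ) * (1 - θ) ^ (-2 : ℝ)) ≤ (∫ p in A n, G θ n p) ∧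
      (∫ p in A n, G θ n p) ≤ C * ((n : ℝ) ^ ((3 - θ) / 2) * θ ^ (-1 : ℝ) * (1 - θ) ^ (-2 : ℝ)) := by
  refine ⟨1 / 8, 1 / 8, by norm_num, le_rfl, fun θ h0 h1 n hn => ?_⟩
  exact ⟨(setIntegral_A_G h0 h1 hn).ge, (setIntegral_A_G h0 h1 hn).le⟩
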